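/- arXiv:1705.05268 — 2 statements merged into one kernel-verified Lean document; each statement's English description precedes it below -/
import Mathlib

section
/- Let p be a prime integer and let Λ be a subgroup of (ℝ/ℤ)^{d+1} of order p such that ht(λ) is an integer for every λ ∈ Λ, Λ is non-pyramidal, and the height distribution of Λ is symmetric, i.e., setting s = max{ht(λ) : λ ∈ Λ}, for every integer i one has #{λ ∈ Λ : ht(λ) = i} = #{λ ∈ Λ : ht(λ) = s − i} (this symmetry is the condition that the corresponding lattice simplex is Gorenstein). Then p divides d+1, and setting r = (d+1)/p, Λ is the cyclic subgroup generated by (1/p, …, 1/p) and ht is a bijection from Λ onto {0, r, 2r, …, (p−1)r}, i.e., Λ has δ-polynomial 1 + t^{r} + t^{2r} + ⋯ + t^{(p−1)r}. -/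
open scoped BigOperators

local instance : Fact ((0:ℝ) < 1) := ⟨one_pos⟩

noncomputable def fracR (x : AddCircle (1:ℝ)) : ℝ :=
  ((AddCircle.equivIco 1 0) x : ℝ)

noncomputable def ht {ι : Type*} [Fintype ι] (x : ι → AddCircle (1:ℝ)) : ℝ :=
  ∑ i, fracR (x i)

/-- `Λ` has δ-polynomial `1 + t^step + t^(2*step) + ⋯ + t^((v-1)*step)` :
the height map is a bijection from `Λ` onto `{j*step : 0 ≤ j ≤ v-1}`. -/
def HasDeltaPoly {ι : Type*} [Fintype ι] (v step : ℕ)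
    (Λ : Set (ι → AddCircle (1:ℝ))) : Prop :=
  Set.BijOn ht Λ {y : ℝ | ∃ j : ℕ, j < v ∧ y = (j : ℝ) * (step : ℝ)}

def NonPyramidal {ι : Type*} [Fintype ι] (Λ : Set (ι → AddCircle (1:ℝ))) : Prop :=
  ∀ i : ι, ∃ x ∈ Λ, x i ≠ 0

theorem coe_fracR (x : AddCircle (1:ℝ)) : ((fracR x : ℝ) : AddCircle (1:ℝ)) = x :=
  (AddCircle.equivIco 1 0).symm_apply_apply x

theorem fracR_nonneg (x : AddCircle (1:ℝ)) : 0 ≤ fracR x :=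
  ((AddCircle.equivIco 1 0) x).2.1

theorem fracR_lt_one (x : AddCircle (1:ℝ)) : fracR x < 1 := by
  simpa [fracR] using ((AddCircle.equivIco (1:ℝ) 0) x).2.2

theorem fracR_coe {a : ℝ} (h0 : 0 ≤ a) (h1 : a < 1) : fracR (a : AddCircle (1:ℝ)) = a := by
  rw [fracR, AddCircle.equivIco_coe_eq (p := (1:ℝ)) (a := 0) ⟨h0, by simpa using h1⟩]

theorem fracR_zero : fracR 0 = 0 := by
  simpa using fracR_coe (a := 0) le_rfl one_pos

theorem fracR_pos {x : AddCircle (1:ℝ)} (hx : x ≠ 0) : 0 < fracR x := by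
  refine lt_of_le_of_ne (fracR_nonneg x) fun h => hx ?_
  rw [← coe_fracR x, ← h, AddCircle.coe_zero]

theorem fracR_neg {x : AddCircle (1:ℝ)} (hx : x ≠ 0) : fracR (-x) = 1 - fracR x := by
  have h : ((1 - fracR x : ℝ) : AddCircle (1:ℝ)) = -x := by
    rw [AddCircle.coe_sub, AddCircle.coe_period, coe_fracR, zero_sub]
  rw [← h]
  exact fracR_coe (by linarith [fracR_lt_one x]) (by linarith [fracR_pos hx])

theorem inv_le_fracR_of_nsmul_eq_zero {n : ℕ} (hn : 0 < n) {x : AddCircle (1:ℝ)} (hx : x ≠ 0)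
    (h : n • x = 0) : 1 / (n : ℝ) ≤ fracR x := by
  have hc : ((n • fracR x : ℝ) : AddCircle (1:ℝ)) = 0 := by
    rw [AddCircle.coe_nsmul, coe_fracR, h]
  obtain ⟨z, hz⟩ := (AddCircle.coe_eq_zero_iff (1:ℝ)).1 hc
  have hn' : (0:ℝ) < n := by exact_mod_cast hn
  simp only [zsmul_eq_mul, mul_one, nsmul_eq_mul] at hz
  have hz0 : (0:ℝ) < z := by rw [hz]; exact mul_pos hn' (fracR_pos hx)
  have hz1 : (1:ℝ) ≤ z := by exact_mod_cast (show (0:ℤ) < z by exact_mod_cast hz0)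
  rw [div_le_iff₀ hn']
  linarith

section Height

variable {ι : Type*} [Fintype ι]

theorem ht_nonneg (x : ι → AddCircle (1:ℝ)) : 0 ≤ ht x :=
  Finset.sum_nonneg fun i _ => fracR_nonneg (x i)

theorem ht_lt_card [Nonempty ι] (x : ι → AddCircle (1:ℝ)) : ht x < Fintype.card ι := by
  calc ht x < ∑ _i : ι, (1:ℝ) :=
        Finset.sum_lt_sum_of_nonempty Finset.univ_nonempty fun i _ => fracR_lt_one (x i)
    _ = Fintype.card ι := by simp

theorem ht_zero : ht (0 : ι → AddCircle (1:ℝ)) = 0 := by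
  simp [ht, fracR_zero]

theorem ht_eq_zero_iff {x : ι → AddCircle (1:ℝ)} : ht x = 0 ↔ x = 0 := by
  refine ⟨fun h => ?_, fun h => h ▸ ht_zero⟩
  have h' := (Finset.sum_eq_zero_iff_of_nonneg fun i _ => fracR_nonneg (x i)).1 h
  funext i
  by_contra hi
  exact (fracR_pos hi).ne' (h' i (Finset.mem_univ i))

theorem ht_neg {x : ι → AddCircle (1:ℝ)} (hx : ∀ i, x i ≠ 0) :
    ht (-x) = Fintype.card ι - ht x := by
  simp [ht, fracR_neg (hx _)]

theorem apply_ne_zero_of_nonPyramidal {p : ℕ} (hp : p.Prime)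
    {Λ : AddSubgroup (ι → AddCircle (1:ℝ))} (hcard : Nat.card Λ = p)
    (hnp : NonPyramidal (Λ : Set (ι → AddCircle (1:ℝ)))) {x : ι → AddCircle (1:ℝ)}
    (hx : x ∈ Λ) (hx0 : x ≠ 0) (i : ι) : x i ≠ 0 := by
  have := Fact.mk hp
  intro hi
  obtain ⟨y, hy, hyi⟩ := hnp i
  obtain ⟨k, hk⟩ := AddSubgroup.mem_zmultiples_iff.1 (mem_zmultiples_of_prime_card hcard
    (g := (⟨x, hx⟩ : Λ)) (g' := ⟨y, hy⟩) fun h => hx0 (congrArg Subtype.val h))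
  have hk' : k • x = y := congrArg Subtype.val hk
  apply hyi
  rw [← hk', Pi.smul_apply, hi, smul_zero]

theorem ncard_ht_eq_reflect {Λ : AddSubgroup (ι → AddCircle (1:ℝ))}
    (hne : ∀ x ∈ Λ, x ≠ 0 → ∀ i, x i ≠ 0) {c : ℝ} (h0 : c ≠ 0) (h1 : c ≠ Fintype.card ι) :
    Set.ncard {x | x ∈ Λ ∧ ht x = c} = Set.ncard {x | x ∈ Λ ∧ ht x = Fintype.card ι - c} := by
  have hneg : ∀ {a : ℝ}, a ≠ 0 → ∀ x ∈ Λ, ht x = a → ht (-x) = Fintype.card ι - a := by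
    intro a ha x hx hxa
    rw [ht_neg (hne x hx fun h => ha (by rw [← hxa, h, ht_zero])), hxa]
  refine Set.ncard_congr (fun x _ => -x) ?_ ?_ ?_
  · rintro x ⟨hx, hxc⟩
    exact ⟨neg_mem hx, hneg h0 x hx hxc⟩
  · intro x y _ _ h
    exact neg_injective h
  · rintro y ⟨hy, hyc⟩
    refine ⟨-y, ⟨neg_mem hy, ?_⟩, neg_neg y⟩
    rw [hneg (sub_ne_zero.2 h1.symm) y hy hyc, sub_sub_cancel]

theorem eq_const_of_ht_eq {p : ℕ} (hp : 0 < p) {x : ι → AddCircle (1:ℝ)}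
    (hx : ∀ i, x i ≠ 0) (hpx : p • x = 0) (h : ht x = Fintype.card ι / p) :
    x = fun _ => ((1 / (p:ℝ) : ℝ) : AddCircle (1:ℝ)) := by
  have hle : ∀ i ∈ Finset.univ, 1 / (p : ℝ) ≤ fracR (x i) := fun i _ =>
    inv_le_fracR_of_nsmul_eq_zero hp (hx i) (congrFun hpx i)
  have hsum : ∑ _i : ι, 1 / (p : ℝ) = ∑ i, fracR (x i) := by
    rw [← ht, h]
    simp [div_eq_mul_inv]
  funext i
  rw [(Finset.sum_eq_sum_iff_of_le hle).1 hsum i (Finset.mem_univ i), coe_fracR]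

end Height

/-- A sequence with a single `1` at the origin and nothing to its left, symmetric about `s / 2`
and, away from `0` and `D`, about `D / 2`, is the indicator of the multiples of `D - s` up to
`s`. -/
theorem eq_indicator_multiples_of_reflections {N : ℤ → ℕ} {s D : ℤ} (hs : 0 ≤ s) (hsD : s < D)
    (hN0 : N 0 = 1) (hneg : ∀ i < 0, N i = 0) (hrefl_s : ∀ i, N i = N (s - i))
    (hrefl_D : ∀ i, i ≠ 0 → i ≠ D → N i = N (D - i)) :
    ∃ m : ℕ, s = m * (D - s) ∧ (∀ j : ℕ, j ≤ m → N (j * (D - s)) = 1) ∧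
      ∀ i, N i ≠ 0 → ∃ j : ℕ, j ≤ m ∧ i = j * (D - s) := by
  obtain ⟨r, hr⟩ : ∃ r, r = D - s := ⟨_, rfl⟩
  rw [← hr]
  have hr0 : 0 < r := by omega
  have hNs : N s = 1 := by rw [hrefl_s, sub_self, hN0]
  have hshift : ∀ i, i ≠ s → i ≠ -r → N (i + r) = N i := by
    intro i h1 h2
    rw [hrefl_s i, hrefl_D (s - i) (by omega) (by omega)]
    congr 1
    omega
  have hoff : ∀ t, 0 < t → t < r → ∀ q : ℕ, N (t + q * r) = 0 := by
    intro t ht0 htr q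
    induction q with
    | zero =>
      have h := hshift (t - r) (by omega) (by omega)
      rw [hneg (t - r) (by omega)] at h
      simpa using h
    | succ q ih =>
      have hq : 0 ≤ (q : ℤ) * r := by positivity
      have h := hshift (t + q * r) (fun h => by rw [h] at ih; omega) (by omega)
      rw [← ih, ← h]
      congr 1
      push_cast
      ring
  have hsupp : ∀ i, N i ≠ 0 → ∃ j : ℕ, i = j * r := by
    intro i hi
    have hi0 : 0 ≤ i := by
      by_contra h
      exact hi (hneg i (by omega))
    obtain ⟨q, hq⟩ := Int.eq_ofNat_of_zero_le (Int.ediv_nonneg hi0 hr0.le)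
    have hdiv := Int.emod_add_mul_ediv i r
    rw [hq, mul_comm] at hdiv
    refine ⟨q, ?_⟩
    rcases (Int.emod_nonneg i hr0.ne').eq_or_lt with h | h
    · rw [← h, zero_add] at hdiv
      exact hdiv.symm
    · exact absurd (hdiv ▸ hoff _ h (Int.emod_lt_of_pos i hr0) q) hi
  obtain ⟨m, hm⟩ := hsupp s (by omega)
  refine ⟨m, hm, ?_, ?_⟩
  · intro j
    induction j with
    | zero => simpa using hN0
    | succ j ih =>
      intro hj
      have hjs : (j : ℤ) * r < m * r := by
        have : (j : ℤ) < m := by exact_mod_cast hj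
        gcongr
      have hj0 : 0 ≤ (j : ℤ) * r := by positivity
      rw [Nat.cast_succ, add_mul, one_mul, hshift (j * r) (by omega) (by omega), ih (by omega)]
  · intro i hi
    obtain ⟨j, rfl⟩ := hsupp i hi
    refine ⟨j, ?_, rfl⟩
    by_contra hjm
    refine hi ?_
    rw [hrefl_s]
    apply hneg
    have : (m : ℤ) * r < j * r := by
      have : (m : ℤ) < j := by exact_mod_cast not_le.1 hjm
      gcongr
    omega

theorem ncard_multiples {v r : ℕ} (hr : 0 < r) :
    Set.ncard {y : ℝ | ∃ j : ℕ, j < v ∧ y = (j : ℝ) * (r : ℝ)} = v := by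
  have h : {y : ℝ | ∃ j : ℕ, j < v ∧ y = (j : ℝ) * (r : ℝ)} =
      (fun j : ℕ => (j : ℝ) * (r : ℝ)) '' (Finset.range v : Set ℕ) := by
    ext y
    simp [eq_comm]
  rw [h, Set.ncard_image_of_injective, Set.ncard_coe_finset, Finset.card_range]
  intro a b hab
  have hr' : (r : ℝ) ≠ 0 := by exact_mod_cast hr.ne'
  exact_mod_cast mul_right_cancel₀ hr' hab

theorem stmt_6 (p d : ℕ) (hp : p.Prime)
    (Λ : AddSubgroup (Fin (d+1) → AddCircle (1:ℝ)))
    (hcard : Nat.card Λ = p)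
    (hint : ∀ x ∈ Λ, ∃ z : ℤ, ht x = (z : ℝ))
    (hnp : NonPyramidal (Λ : Set (Fin (d+1) → AddCircle (1:ℝ))))
    (hsym : ∀ i : ℤ,
      Set.ncard {x : Fin (d+1) → AddCircle (1:ℝ) | x ∈ Λ ∧ ht x = (i : ℝ)} =
      Set.ncard {x : Fin (d+1) → AddCircle (1:ℝ) | x ∈ Λ ∧
        ht x = sSup (ht '' (Λ : Set (Fin (d+1) → AddCircle (1:ℝ)))) - (i : ℝ)}) :
    p ∣ (d+1) ∧
    Λ = AddSubgroup.zmultiples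
      (fun _ : Fin (d+1) => ((1 / (p:ℝ) : ℝ) : AddCircle (1:ℝ))) ∧
    HasDeltaPoly p ((d+1)/p) (Λ : Set (Fin (d+1) → AddCircle (1:ℝ))) := by
  have := Fact.mk hp
  have hΛfin : (Λ : Set (Fin (d+1) → AddCircle (1:ℝ))).Finite :=
    Nat.finite_of_card_ne_zero (α := Λ) (by rw [hcard]; exact hp.ne_zero)
  have hne : ∀ x ∈ Λ, x ≠ 0 → ∀ i, x i ≠ 0 := fun x hx hx0 =>
    apply_ne_zero_of_nonPyramidal hp hcard hnp hx hx0
  obtain ⟨μ, hμ, hμs⟩ : sSup (ht '' (Λ : Set (Fin (d+1) → AddCircle (1:ℝ)))) ∈ ht '' _ :=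
    Set.Nonempty.csSup_mem (Set.Nonempty.image ht ⟨0, zero_mem Λ⟩) (hΛfin.image ht)
  obtain ⟨s, hs⟩ := hint μ hμ
  rw [← hμs, hs] at hsym
  have hs0 : 0 ≤ s := by exact_mod_cast hs ▸ ht_nonneg μ
  have hsD : s < ((d + 1 : ℕ) : ℤ) := by
    have h := ht_lt_card μ
    rw [hs, Fintype.card_fin] at h
    exact_mod_cast h
  obtain ⟨m, hsm, hone, hsupp⟩ := eq_indicator_multiples_of_reflections
    (N := fun i : ℤ => Set.ncard {x : Fin (d+1) → AddCircle (1:ℝ) | x ∈ Λ ∧ ht x = (i : ℝ)})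
    hs0 hsD
    (by
      rw [Set.ncard_eq_one]
      refine ⟨0, Set.ext fun x => ?_⟩
      simp only [Int.cast_zero, ht_eq_zero_iff, Set.mem_ofPred_eq, Set.mem_singleton_iff]
      exact ⟨fun h => h.2, fun h => ⟨h ▸ zero_mem Λ, h⟩⟩)
    (fun i hi => by
      have hi' : (i : ℝ) < 0 := by exact_mod_cast hi
      have h : {x | x ∈ Λ ∧ ht x = (i : ℝ)} = ∅ :=
        Set.eq_empty_of_forall_notMem fun x hx => by linarith [ht_nonneg x, hx.2]
      rw [h, Set.ncard_empty])
    (fun i => by simpa using hsym i)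
    (fun i h0 h1 => by
      have h := ncard_ht_eq_reflect hne (c := (i : ℝ)) (by exact_mod_cast h0)
        (by rw [Fintype.card_fin]; exact_mod_cast h1)
      simpa using h)
  obtain ⟨r, hr⟩ := Int.eq_ofNat_of_zero_le (sub_nonneg.2 hsD.le)
  rw [hr] at hsm hone hsupp
  have hr0 : 0 < r := by omega
  have hbij : HasDeltaPoly (m + 1) r (Λ : Set (Fin (d+1) → AddCircle (1:ℝ))) := by
    have hfin : ∀ c : ℝ, {x | x ∈ Λ ∧ ht x = c}.Finite := fun c =>
      hΛfin.subset fun x hx => hx.1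
    have hmul : ∀ x ∈ Λ, ∃ j : ℕ, j ≤ m ∧ ht x = (((j : ℤ) * (r : ℤ) : ℤ) : ℝ) := by
      intro x hx
      obtain ⟨z, hz⟩ := hint x hx
      obtain ⟨j, hj, rfl⟩ := hsupp z (Set.ncard_ne_zero_of_mem ⟨hx, hz⟩ (hfin _))
      exact ⟨j, hj, hz⟩
    refine ⟨?_, ?_, ?_⟩
    · intro x hx
      obtain ⟨j, hj, hxj⟩ := hmul x hx
      exact ⟨j, by omega, by simpa using hxj⟩
    · intro x hx y hy hxy
      obtain ⟨j, hj, hxj⟩ := hmul x hx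
      exact (Set.ncard_le_one (hfin _)).1 (hone j hj).le x ⟨hx, hxj⟩ y ⟨hy, hxy ▸ hxj⟩
    · rintro y ⟨j, hj, rfl⟩
      obtain ⟨x, hx⟩ := Set.ncard_eq_one.1 (hone j (by omega))
      have hxm : x ∈ ({x} : Set (Fin (d+1) → AddCircle (1:ℝ))) := rfl
      rw [← hx] at hxm
      exact ⟨x, hxm.1, by simpa using hxm.2⟩
  have hmp : m + 1 = p := by
    rw [← hcard, ← ncard_multiples (v := m + 1) hr0, ← hbij.image_eq,
      hbij.injOn.ncard_image]
    rfl
  have hD : d + 1 = p * r := by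
    rw [← hmp]
    zify
    push_cast at hr
    linarith
  rw [hmp] at hbij
  have hdiv : (d + 1) / p = r := by rw [hD, Nat.mul_div_cancel_left r hp.pos]
  refine ⟨⟨r, hD⟩, ?_, hdiv.symm ▸ hbij⟩
  obtain ⟨x, hx, hxr⟩ := hbij.surjOn ⟨1, hp.one_lt, rfl⟩
  have hx0 : x ≠ 0 := by
    rw [Ne, ← ht_eq_zero_iff, hxr]
    simpa using hr0.ne'
  have hpx : p • x = 0 := by
    have h := card_nsmul_eq_zero' (x := (⟨x, hx⟩ : Λ))
    rw [hcard] at h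
    exact congrArg Subtype.val h
  have hp0 : (p : ℝ) ≠ 0 := by exact_mod_cast hp.ne_zero
  rw [← eq_const_of_ht_eq hp.pos (hne x hx hx0) hpx (by
    rw [hxr, Fintype.card_fin, hD]
    push_cast
    field_simp)]
  refine le_antisymm (fun y hy => ?_) (AddSubgroup.zmultiples_le_of_mem hx)
  obtain ⟨k, hk⟩ := AddSubgroup.mem_zmultiples_iff.1 (mem_zmultiples_of_prime_card hcard
    (g := (⟨x, hx⟩ : Λ)) (g' := ⟨y, hy⟩) fun h => hx0 (congrArg Subtype.val h))
  exact AddSubgroup.mem_zmultiples_iff.2 ⟨k, congrArg Subtype.val hk⟩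
end

section
/- Let v ≥ 2 and t ≥ 1 be integers and let 1 < v₁ < v₂ < ⋯ < v_t = v be integers with v_i dividing v_{i+1} for 1 ≤ i ≤ t−1; set v₀ = 1. Let s₁, …, s_t be positive integers, set d + 1 = s₁ + ⋯ + s_t, and let Λ be the cyclic subgroup of (ℝ/ℤ)^{d+1} generated by the element whose coordinates in the i-th consecutive block of size s_i all equal 1/v_i (for i = 1, …, t). Then, for a nonnegative integer k, Λ has δ-polynomial 1 + t^{k+1} + t^{2(k+1)} + ⋯ + t^{(v−1)(k+1)} if and only if s_i = (v/v_{i−1} − v/v_{i+1})(k+1) for every 1 ≤ i ≤ t−1 and s_t = (v/v_{t−1})(k+1). -/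
open scoped BigOperators

theorem Nat.add_mod_of_lt_of_dvd {a b c m : ℕ} (ha : a < m) (hb : m ∣ b) (hc : m ∣ c)
    (hc0 : 0 < c) : (a + b) % c = a % c + b % c := by
  obtain ⟨b', rfl⟩ := hb
  obtain ⟨c', rfl⟩ := hc
  have hc' : 0 < c' := Nat.pos_of_mul_pos_left hc0
  apply Nat.add_mod_of_add_mod_lt
  rw [Nat.mul_mod_mul_left]
  have h1 : b' % c' + 1 ≤ c' := Nat.mod_lt _ hc'
  have h2 : a % (m * c') ≤ a := Nat.mod_le _ _
  nlinarith [Nat.mul_le_mul_left m h1]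

theorem dvd_of_le_of_dvd_succ {W : ℕ → ℕ} (hd : ∀ i, W i ∣ W (i + 1)) {i j : ℕ} (h : i ≤ j) :
    W i ∣ W j :=
  Nat.le_induction dvd_rfl (fun n _ ih => ih.trans (hd n)) j h

/-- The height of the `n`-th multiple of the generator, for block sizes `S i` and
denominators `W (i + 1)`. -/
noncomputable def blockHeight (W S : ℕ → ℕ) (t n : ℕ) : ℝ :=
  ∑ l ∈ Finset.range t, (S l : ℝ) * (((n % W (l + 1) : ℕ) : ℝ) / (W (l + 1) : ℝ))

section BlockHeight

variable {W S : ℕ → ℕ} {t : ℕ}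

theorem blockHeight_nonneg (n : ℕ) : 0 ≤ blockHeight W S t n :=
  Finset.sum_nonneg fun _ _ => by positivity

theorem blockHeight_add (hm : StrictMono W) (hd : ∀ i, W i ∣ W (i + 1)) {a b i : ℕ}
    (ha : a < W i) (hb : W i ∣ b) :
    blockHeight W S t (a + b) = blockHeight W S t a + blockHeight W S t b := by
  unfold blockHeight
  rw [← Finset.sum_add_distrib]
  refine Finset.sum_congr rfl fun l _ => ?_
  have hpos : 0 < W (l + 1) := (Nat.zero_le _).trans_lt (hm (Nat.lt_succ_self l))
  have key : (a + b) % W (l + 1) = a % W (l + 1) + b % W (l + 1) := by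
    rcases le_total i (l + 1) with h | h
    · exact Nat.add_mod_of_lt_of_dvd ha hb (dvd_of_le_of_dvd_succ hd h) hpos
    · have hb' := (dvd_of_le_of_dvd_succ hd h).trans hb
      rw [Nat.add_mod, Nat.mod_eq_zero_of_dvd hb']
      simp
  rw [key]
  push_cast
  ring

theorem blockHeight_mul (hm : StrictMono W) (hd : ∀ i, W i ∣ W (i + 1)) {q i : ℕ}
    (hq : q * W i < W (i + 1)) :
    blockHeight W S t (q * W i) = q * blockHeight W S t (W i) := by
  unfold blockHeight
  rw [Finset.mul_sum]
  refine Finset.sum_congr rfl fun l _ => ?_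
  have key : (q * W i) % W (l + 1) = q * (W i % W (l + 1)) := by
    rcases lt_or_ge l i with h | h
    · have h' := dvd_of_le_of_dvd_succ hd (Nat.succ_le_of_lt h)
      rw [Nat.mod_eq_zero_of_dvd h', Nat.mod_eq_zero_of_dvd (h'.mul_left q), mul_zero]
    · have h1 : W (i + 1) ≤ W (l + 1) := hm.monotone (by omega)
      rw [Nat.mod_eq_of_lt (hq.trans_le h1),
        Nat.mod_eq_of_lt ((hm (Nat.lt_succ_self i)).trans_le h1)]
  rw [key]
  push_cast
  ring

theorem blockHeight_succ (hm : StrictMono W) (hd : ∀ i, W i ∣ W (i + 1)) {i : ℕ} (hi : i < t) :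
    blockHeight W S t (W i) * W (i + 1) =
      blockHeight W S t (W (i + 1)) * W i + S i * W i := by
  have hS : (S i : ℝ) * W i = ∑ l ∈ Finset.range t, if l = i then (S i : ℝ) * W i else 0 := by
    rw [Finset.sum_ite_eq' (Finset.range t) i, if_pos (Finset.mem_range.2 hi)]
  rw [hS]
  unfold blockHeight
  rw [Finset.sum_mul, Finset.sum_mul, ← Finset.sum_add_distrib]
  refine Finset.sum_congr rfl fun l _ => ?_
  have hpos : (W (l + 1) : ℝ) ≠ 0 := by
    have : 0 < W (l + 1) := (Nat.zero_le _).trans_lt (hm (Nat.lt_succ_self l))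
    positivity
  rcases lt_trichotomy l i with h | h | h
  · have h1 := dvd_of_le_of_dvd_succ hd (Nat.succ_le_of_lt h)
    rw [Nat.mod_eq_zero_of_dvd h1, Nat.mod_eq_zero_of_dvd (h1.trans (hd i)), if_neg h.ne]
    simp
  · subst h
    rw [Nat.mod_self, Nat.mod_eq_of_lt (hm (Nat.lt_succ_self l)), if_pos rfl]
    field_simp
    simp
  · rw [Nat.mod_eq_of_lt (hm (by omega : i < l + 1)),
      Nat.mod_eq_of_lt (hm (by omega : i + 1 < l + 1)), if_neg h.ne']
    ring

theorem blockHeight_last (hd : ∀ i, W i ∣ W (i + 1)) : blockHeight W S t (W t) = 0 := by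
  refine Finset.sum_eq_zero fun l hl => ?_
  rw [Nat.mod_eq_zero_of_dvd
    (dvd_of_le_of_dvd_succ hd (Nat.succ_le_of_lt (Finset.mem_range.1 hl)))]
  simp

end BlockHeight

/-- The multiples of `W i` below `v` are mapped by `f` onto the integers in `[0, v / W i)`. -/
def MultiplesFill (W : ℕ → ℕ) (v : ℕ) (f : ℕ → ℝ) (i : ℕ) : Prop :=
  (∀ r < v / W i, ∃ n < v, W i ∣ n ∧ f n = r) ∧ ∀ n < v, W i ∣ n → f n < (v / W i : ℕ)

section Filling

variable {W : ℕ → ℕ} {t : ℕ} {f : ℕ → ℝ}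

theorem multiplesFill_last (hW : 0 < W t) (h0 : f 0 = 0) : MultiplesFill W (W t) f t := by
  unfold MultiplesFill
  rw [Nat.div_self hW]
  refine ⟨fun r hr => ⟨0, hW, dvd_zero _, ?_⟩, fun n hn hd => ?_⟩
  · rw [h0, Nat.lt_one_iff.1 hr, Nat.cast_zero]
  · rw [Nat.eq_zero_of_dvd_of_lt hd hn, h0]
    norm_num

theorem MultiplesFill.pred (hd : ∀ i, W i ∣ W (i + 1)) (hpos : ∀ i, 0 < W i)
    (hadd : ∀ {a b i : ℕ}, a < W i → W i ∣ b → f (a + b) = f a + f b)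
    (hmul : ∀ {q i : ℕ}, q * W i < W (i + 1) → f (q * W i) = q * f (W i))
    {i : ℕ} (hi : i < t) (hf : f (W i) = (W t / W (i + 1) : ℕ))
    (h : MultiplesFill W (W t) f (i + 1)) : MultiplesFill W (W t) f i := by
  obtain ⟨m, hmW⟩ := hd i
  obtain ⟨M, hM⟩ := dvd_of_le_of_dvd_succ hd (Nat.succ_le_of_lt hi)
  have hdiv : W t / W (i + 1) = M := by rw [hM, Nat.mul_div_cancel_left _ (hpos _)]
  have hdiv' : W t / W i = m * M := by
    rw [hM, hmW, mul_assoc, Nat.mul_div_cancel_left _ (hpos _)]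
  have hM0 : 0 < M := Nat.pos_of_mul_pos_left (hM ▸ hpos t)
  unfold MultiplesFill at h ⊢
  rw [hdiv] at h hf
  rw [hdiv']
  obtain ⟨hsurj, hlt⟩ := h
  constructor
  · intro r hr
    obtain ⟨n, hn, hdn, hfn⟩ := hsurj (r % M) (Nat.mod_lt _ hM0)
    have hq : r / M < m := (Nat.div_lt_iff_lt_mul hM0).2 hr
    have hq' : r / M * W i < W (i + 1) := by
      rw [hmW, mul_comm]
      exact Nat.mul_lt_mul_of_pos_left hq (hpos i)
    refine ⟨r / M * W i + n, ?_, (Dvd.intro_left _ rfl).add ((hd i).trans hdn), ?_⟩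
    · obtain ⟨n', rfl⟩ := hdn
      have : n' < M := by
        rw [hM] at hn
        exact Nat.lt_of_mul_lt_mul_left hn
      rw [hM]
      nlinarith [Nat.mul_le_mul_left (W (i + 1)) (Nat.succ_le_of_lt this)]
    · rw [hadd hq' hdn, hmul hq', hf, hfn]
      exact_mod_cast Nat.div_add_mod' r M
  · intro n hn hdn
    obtain ⟨q, hq⟩ : W i ∣ n % W (i + 1) := (Nat.dvd_mod_iff (hd i)).2 hdn
    have hqlt : q * W i < W (i + 1) := by
      rw [mul_comm, ← hq]
      exact Nat.mod_lt _ (hpos _)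
    have hqm : q + 1 ≤ m := by
      rw [hmW, mul_comm] at hqlt
      exact Nat.lt_of_mul_lt_mul_left hqlt
    have hsplit : n = q * W i + W (i + 1) * (n / W (i + 1)) := by
      rw [mul_comm q, ← hq, Nat.mod_add_div]
    have hb := hlt (W (i + 1) * (n / W (i + 1)))
      ((Nat.mul_div_le _ _).trans_lt hn) (dvd_mul_right _ _)
    rw [hsplit, hadd hqlt (dvd_mul_right _ _), hmul hqlt, hf]
    have h1 : ((q : ℝ) + 1) * M ≤ m * M := by
      exact_mod_cast Nat.mul_le_mul_right M hqm
    push_cast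
    linarith

theorem multiplesFill_of_eq (hd : ∀ i, W i ∣ W (i + 1)) (hpos : ∀ i, 0 < W i)
    (h0 : f 0 = 0)
    (hadd : ∀ {a b i : ℕ}, a < W i → W i ∣ b → f (a + b) = f a + f b)
    (hmul : ∀ {q i : ℕ}, q * W i < W (i + 1) → f (q * W i) = q * f (W i))
    (hf : ∀ i < t, f (W i) = (W t / W (i + 1) : ℕ)) {i : ℕ} (hi : i ≤ t) :
    MultiplesFill W (W t) f i := by
  induction hi using Nat.decreasingInduction with
  | self => exact multiplesFill_last (hpos t) h0
  | of_succ k hk ih => exact ih.pred hd hpos hadd hmul hk (hf k hk)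

theorem bijOn_of_surjOn_range {v : ℕ} (h : ∀ r < v, ∃ n < v, f n = r) :
    Set.BijOn f (Set.Iio v) {y : ℝ | ∃ j : ℕ, j < v ∧ y = j} := by
  classical
  have hsub : (Finset.range v).image (fun j : ℕ => (j : ℝ)) ⊆ (Finset.range v).image f := by
    intro y hy
    obtain ⟨r, hr, rfl⟩ := Finset.mem_image.1 hy
    obtain ⟨n, hn, hfn⟩ := h r (Finset.mem_range.1 hr)
    exact Finset.mem_image.2 ⟨n, Finset.mem_range.2 hn, hfn⟩
  have hcard : ((Finset.range v).image (fun j : ℕ => (j : ℝ))).card = v := by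
    rw [Finset.card_image_of_injective _ Nat.cast_injective, Finset.card_range]
  have hle : ((Finset.range v).image f).card ≤ v :=
    Finset.card_image_le.trans (Finset.card_range v).le
  have heq := Finset.eq_of_subset_of_card_le hsub (hle.trans hcard.ge)
  refine ⟨fun n hn => ?_, ?_, ?_⟩
  · have : f n ∈ (Finset.range v).image f :=
      Finset.mem_image_of_mem _ (Finset.mem_range.2 hn)
    rw [← heq] at this
    obtain ⟨j, hj, hjn⟩ := Finset.mem_image.1 this
    exact ⟨j, Finset.mem_range.1 hj, hjn.symm⟩
  · have : Set.InjOn f (Finset.range v) := by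
      rw [← Finset.card_image_iff, ← heq, hcard, Finset.card_range]
    simpa [Finset.coe_range] using this
  · rintro y ⟨r, hr, rfl⟩
    obtain ⟨n, hn, hfn⟩ := h r hr
    exact ⟨n, hn, hfn⟩

theorem MultiplesFill.eq_of_bijOn (hm : StrictMono W) (hd : ∀ i, W i ∣ W (i + 1))
    (hW0 : W 0 = 1) (hpos : ∀ i, 0 < W i) (hnn : ∀ n, 0 ≤ f n)
    (hadd : ∀ {a b i : ℕ}, a < W i → W i ∣ b → f (a + b) = f a + f b)
    (hmul : ∀ {q i : ℕ}, q * W i < W (i + 1) → f (q * W i) = q * f (W i))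
    (hlt : ∀ i < t, f (W (i + 1)) * W i < f (W i) * W (i + 1))
    (hbij : Set.BijOn f (Set.Iio (W t)) {y : ℝ | ∃ j : ℕ, j < W t ∧ y = j})
    {i : ℕ} (hi : i < t) (h : MultiplesFill W (W t) f (i + 1)) :
    f (W i) = (W t / W (i + 1) : ℕ) := by
  obtain ⟨hsurj, hbound⟩ := h
  obtain ⟨M, hM⟩ := dvd_of_le_of_dvd_succ hd (Nat.succ_le_of_lt hi)
  have hdiv : W t / W (i + 1) = M := by rw [hM, Nat.mul_div_cancel_left _ (hpos _)]
  have hM0 : 0 < M := Nat.pos_of_mul_pos_left (hM ▸ hpos t)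
  rw [hdiv] at hsurj hbound ⊢
  have hMlt : M < W t := by
    have : 1 < W (i + 1) := hW0.symm.trans_lt (hm (Nat.succ_pos i))
    rw [hM]
    nlinarith
  obtain ⟨n, hn, hfn⟩ := hbij.surjOn (show (M : ℝ) ∈ _ from ⟨M, hMlt, rfl⟩)
  have hnd : ¬ W (i + 1) ∣ n := fun hdn => (hbound n hn hdn).ne hfn
  have hex : ∃ j, ¬ W j ∣ n := ⟨_, hnd⟩
  obtain ⟨j, hj⟩ : ∃ j, Nat.find hex = j + 1 := by
    refine Nat.exists_eq_succ_of_ne_zero fun h0 => ?_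
    have := Nat.find_spec hex
    rw [h0, hW0] at this
    exact this (one_dvd n)
  have hjn : ¬ W (j + 1) ∣ n := hj ▸ Nat.find_spec hex
  have hjd : W j ∣ n := not_not.1 (Nat.find_min hex (by omega))
  have hji : j ≤ i := by
    have := Nat.find_min' hex hnd
    omega
  have hge : (M : ℝ) ≤ f (W j) := by
    have hWj : W j < W t := hm (by omega)
    obtain ⟨c, -, hc⟩ := hbij.mapsTo (show W j ∈ Set.Iio (W t) from hWj)
    by_contra! hcM
    rw [hc] at hcM
    obtain ⟨n', hn', hdn', hfn'⟩ := hsurj c (by exact_mod_cast hcM)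
    have := hbij.injOn (show n' ∈ Set.Iio (W t) from hn') hWj (hfn'.trans hc.symm)
    rw [this] at hdn'
    exact absurd (Nat.le_of_dvd (hpos j) hdn') (not_le.2 (hm (by omega)))
  have hfj : f (W j) = M := by
    refine le_antisymm ?_ hge
    obtain ⟨q, hq⟩ : W j ∣ n % W (j + 1) := (Nat.dvd_mod_iff (hd j)).2 hjd
    have hqlt : q * W j < W (j + 1) := by
      rw [mul_comm, ← hq]
      exact Nat.mod_lt _ (hpos _)
    have hq0 : 1 ≤ q := by
      refine Nat.one_le_iff_ne_zero.2 fun h0 => hjn ?_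
      rw [h0, mul_zero] at hq
      exact Nat.dvd_of_mod_eq_zero hq
    have hsplit : n = q * W j + W (j + 1) * (n / W (j + 1)) := by
      rw [mul_comm q, ← hq, Nat.mod_add_div]
    rw [hsplit, hadd hqlt (dvd_mul_right _ _), hmul hqlt] at hfn
    have h1 : (1 : ℝ) ≤ q := by exact_mod_cast hq0
    nlinarith [hnn (W j), hnn (W (j + 1) * (n / W (j + 1)))]
  rcases hji.eq_or_lt with rfl | hji
  · exact hfj
  exfalso
  have hWj : W (j + 1) < W t := hm (by omega)
  obtain ⟨c, -, hc⟩ := hbij.mapsTo (show W (j + 1) ∈ Set.Iio (W t) from hWj)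
  have hcM : c * W j < M * W (j + 1) := by
    have := hlt j (by omega)
    rw [hc, hfj] at this
    exact_mod_cast this
  obtain ⟨n', hn', hdn', hfn'⟩ := hsurj (c % M) (Nat.mod_lt _ hM0)
  have hqlt : c / M * W j < W (j + 1) := by
    have : M * (c / M * W j) < M * W (j + 1) := by
      rw [← mul_assoc]
      exact (Nat.mul_le_mul_right _ (Nat.mul_div_le c M)).trans_lt hcM
    exact Nat.lt_of_mul_lt_mul_left this
  have hval : f (c / M * W j + n') = f (W (j + 1)) := by
    rw [hadd hqlt ((dvd_of_le_of_dvd_succ hd (by omega)).trans hdn'), hmul hqlt, hfj, hfn', hc]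
    exact_mod_cast Nat.div_add_mod' c M
  have hW' : W (j + 1) < W (i + 1) := hm (by omega)
  have hmem : c / M * W j + n' < W t := by
    obtain ⟨n'', rfl⟩ := hdn'
    have : n'' < M := by
      rw [hM] at hn'
      exact Nat.lt_of_mul_lt_mul_left hn'
    rw [hM]
    nlinarith [Nat.mul_le_mul_left (W (i + 1)) (Nat.succ_le_of_lt this)]
  have heq := hbij.injOn (show _ ∈ Set.Iio (W t) from hmem) hWj hval
  have hn0 : n' = 0 := Nat.eq_zero_of_dvd_of_lt hdn' (by omega)
  omega

theorem bijOn_iff_forall_eq (hm : StrictMono W) (hd : ∀ i, W i ∣ W (i + 1))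
    (hW0 : W 0 = 1) (h0 : f 0 = 0) (hnn : ∀ n, 0 ≤ f n)
    (hadd : ∀ {a b i : ℕ}, a < W i → W i ∣ b → f (a + b) = f a + f b)
    (hmul : ∀ {q i : ℕ}, q * W i < W (i + 1) → f (q * W i) = q * f (W i))
    (hlt : ∀ i < t, f (W (i + 1)) * W i < f (W i) * W (i + 1)) :
    Set.BijOn f (Set.Iio (W t)) {y : ℝ | ∃ j : ℕ, j < W t ∧ y = j} ↔
      ∀ i < t, f (W i) = (W t / W (i + 1) : ℕ) := by
  have hpos : ∀ i, 0 < W i := fun i => by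
    have := hm.monotone (Nat.zero_le i)
    omega
  constructor
  · intro hbij
    have key : ∀ i ≤ t, MultiplesFill W (W t) f i := by
      intro i hi
      induction hi using Nat.decreasingInduction with
      | self => exact multiplesFill_last (hpos t) h0
      | of_succ k hk ih =>
        exact ih.pred hd hpos hadd hmul hk
          (ih.eq_of_bijOn hm hd hW0 hpos hnn hadd hmul hlt hbij hk)
    exact fun i hi => (key (i + 1) hi).eq_of_bijOn hm hd hW0 hpos hnn hadd hmul hlt hbij hi
  · intro hf
    refine bijOn_of_surjOn_range fun r hr => ?_
    obtain ⟨n, hn, -, hfn⟩ :=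
      (multiplesFill_of_eq hd hpos h0 hadd hmul hf (Nat.zero_le t)).1 r (by simpa [hW0] using hr)
    exact ⟨n, hn, hfn⟩

end Filling

section Weights

variable {W S : ℕ → ℕ} {t : ℕ}

theorem blockHeight_eq_iff (hm : StrictMono W) (hd : ∀ i, W i ∣ W (i + 1)) (hpos : ∀ i, 0 < W i)
    (ht : 1 ≤ t) (c : ℕ) :
    (∀ i < t, blockHeight W S t (W i) = (W t / W (i + 1) : ℕ) * (c : ℝ)) ↔
      (∀ i, i + 2 ≤ t → S i = (W t / W i - W t / W (i + 2)) * c) ∧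
        S (t - 1) = W t / W (t - 1) * c := by
  have hR : ∀ i, (W i : ℝ) ≠ 0 := fun i => by
    have := hpos i
    positivity
  have hcast : ∀ i ≤ t, ((W t / W i : ℕ) : ℝ) = W t / W i := fun i hi =>
    Nat.cast_div (dvd_of_le_of_dvd_succ hd hi) (hR i)
  have hmid : ∀ i, i + 2 ≤ t → (S i = (W t / W i - W t / W (i + 2)) * c ↔
      (S i : ℝ) = (W t / W i - W t / W (i + 2)) * c) := by
    intro i hi
    rw [← hcast i (by omega), ← hcast (i + 2) hi,
      ← Nat.cast_sub (Nat.div_le_div_left (hm.monotone (by omega)) (hpos i))]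
    exact_mod_cast Iff.rfl
  have hlast : S (t - 1) = W t / W (t - 1) * c ↔ (S (t - 1) : ℝ) = W t / W (t - 1) * c := by
    rw [← hcast (t - 1) (by omega)]
    exact_mod_cast Iff.rfl
  have hrec := fun i (hi : i < t) => blockHeight_succ (S := S) hm hd hi
  have hend : blockHeight W S t (W t) = 0 := blockHeight_last hd
  obtain ⟨u, rfl⟩ : ∃ u, t = u + 1 := ⟨t - 1, by omega⟩
  rw [Nat.add_sub_cancel] at hlast ⊢
  rw [hlast]
  have hu := hrec u (Nat.lt_succ_self u)
  rw [hend, zero_mul, zero_add] at hu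
  have hu0 := hR u
  have hu1 := hR (u + 1)
  constructor
  · intro h
    refine ⟨fun i hi => (hmid i hi).2 ?_, ?_⟩
    · have h1 := hrec i (by omega)
      rw [h i (by omega), h (i + 1) (by omega), hcast _ (by omega), hcast _ (by omega)] at h1
      have := hR i
      have := hR (i + 1)
      have := hR (i + 2)
      field_simp at h1 ⊢
      linear_combination -h1
    · rw [h u (by omega), hcast _ le_rfl] at hu
      field_simp at hu ⊢
      linear_combination -hu
  · rintro ⟨h, h'⟩ i hi
    have hi' : i ≤ u := by omega
    clear hi
    induction hi' using Nat.decreasingInduction with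
    | self =>
      rw [h'] at hu
      rw [hcast _ le_rfl]
      field_simp at hu ⊢
      linear_combination hu
    | of_succ i hi ih =>
      have h1 := hrec i (by omega)
      rw [ih, (hmid i (by omega)).1 (h i (by omega)), hcast _ (by omega)] at h1
      rw [hcast _ (by omega)]
      have := hR i
      have := hR (i + 1)
      have := hR (i + 1 + 1)
      field_simp at h1 ⊢
      refine mul_right_cancel₀ this ?_
      linear_combination h1

theorem bijOn_blockHeight_iff (hm : StrictMono W) (hd : ∀ i, W i ∣ W (i + 1)) (hW0 : W 0 = 1)
    (ht : 1 ≤ t) (hS : ∀ i < t, 0 < S i) {c : ℕ} (hc : 0 < c) :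
    Set.BijOn (blockHeight W S t) (Set.Iio (W t))
        {y : ℝ | ∃ j : ℕ, j < W t ∧ y = (j : ℝ) * (c : ℝ)} ↔
      (∀ i, i + 2 ≤ t → S i = (W t / W i - W t / W (i + 2)) * c) ∧
        S (t - 1) = W t / W (t - 1) * c := by
  have hpos : ∀ i, 0 < W i := fun i => by
    have := hm.monotone (Nat.zero_le i)
    omega
  have hcR : (0 : ℝ) < c := by exact_mod_cast hc
  rw [← blockHeight_eq_iff hm hd hpos ht c]
  have key := bijOn_iff_forall_eq (t := t) (f := fun n => blockHeight W S t n / c) hm hd hW0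
    (by simp [blockHeight]) (fun n => div_nonneg (blockHeight_nonneg n) hcR.le)
    (fun ha hb => by simp only [blockHeight_add hm hd ha hb, add_div])
    (fun hq => by simp only [blockHeight_mul hm hd hq, mul_div_assoc])
    (fun i hi => by
      have h1 := blockHeight_succ (S := S) hm hd hi
      have h2 : (0 : ℝ) < S i * W i := by exact_mod_cast Nat.mul_pos (hS i hi) (hpos i)
      rw [div_mul_eq_mul_div, div_mul_eq_mul_div]
      exact div_lt_div_of_pos_right (by linarith) hcR)
  simp only [div_eq_iff hcR.ne'] at key
  rw [← key]
  have himg : (fun x : ℝ => x / c) '' {y : ℝ | ∃ j : ℕ, j < W t ∧ y = (j : ℝ) * (c : ℝ)} =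
      {y : ℝ | ∃ j : ℕ, j < W t ∧ y = j} := by
    ext y
    constructor
    · rintro ⟨_, ⟨j, hj, rfl⟩, rfl⟩
      exact ⟨j, hj, mul_div_cancel_right₀ _ hcR.ne'⟩
    · rintro ⟨j, hj, rfl⟩
      exact ⟨_, ⟨j, hj, rfl⟩, mul_div_cancel_right₀ _ hcR.ne'⟩
  have hinj : Function.Injective fun x : ℝ => x / c := fun _ _ h => (div_left_inj' hcR.ne').1 h
  rw [← himg]
  constructor
  · exact fun h => (hinj.injOn.bijOn_image).comp h
  · intro h
    refine ⟨fun n hn => ?_, fun a ha b hb hab => h.injOn ha hb (congrArg (· / (c : ℝ)) hab), ?_⟩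
    · obtain ⟨y, hy, hyn⟩ := h.mapsTo hn
      exact hinj hyn ▸ hy
    · intro y hy
      obtain ⟨n, hn, hny⟩ := h.surjOn (Set.mem_image_of_mem _ hy)
      exact ⟨n, hn, hinj hny⟩

end Weights

theorem fracR_nsmul_one_div (n m : ℕ) :
    fracR (n • ((1 / (m : ℝ) : ℝ) : AddCircle (1 : ℝ))) = ((n % m : ℕ) : ℝ) / m := by
  unfold fracR
  rw [← AddCircle.coe_nsmul, AddCircle.coe_equivIco_mk_apply, nsmul_eq_mul, mul_one_div, div_one,
    mul_one, Int.fract_div_natCast_eq_div_natCast_mod]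

theorem image_nsmul_Iio_eq_zmultiples {G : Type*} [AddGroup G] {g : G} {v : ℕ} (hv : 0 < v)
    (hg : v • g = 0) :
    (fun n : ℕ => n • g) '' Set.Iio v = (AddSubgroup.zmultiples g : Set G) := by
  ext x
  constructor
  · rintro ⟨n, -, rfl⟩
    exact AddSubgroup.nsmul_mem_zmultiples g n
  · rintro ⟨z, rfl⟩
    have hv' : (v : ℤ) ≠ 0 := by exact_mod_cast hv.ne'
    have hnn := Int.emod_nonneg z hv'
    have hlt := Int.emod_lt_of_pos z (by exact_mod_cast hv : (0 : ℤ) < v)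
    refine ⟨(z % v).toNat, Set.mem_Iio.2 (by omega), ?_⟩
    change (z % v).toNat • g = z • g
    have hz : (v : ℤ) • g = 0 := by rw [natCast_zsmul, hg]
    rw [← natCast_zsmul, Int.toNat_of_nonneg hnn]
    conv_rhs => rw [← Int.emod_add_mul_ediv z v, add_zsmul, mul_comm, mul_zsmul, hz, zsmul_zero,
      add_zero]

theorem stmt_10 (v t k : ℕ) (ht1 : 1 ≤ t) (hv : 2 ≤ v)
    (w : Fin (t+1) → ℕ) (hw0 : w 0 = 1) (hwlast : w (Fin.last t) = v)
    (hmono : StrictMono w) (hdvd : ∀ i : Fin t, w i.castSucc ∣ w i.succ)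
    (s : Fin t → ℕ) (hs : ∀ b, 0 < s b) :
    HasDeltaPoly v (k+1)
      ((AddSubgroup.zmultiples
        (fun x : (b : Fin t) × Fin (s b) =>
          ((1 / (w x.1.succ : ℝ) : ℝ) : AddCircle (1:ℝ)))) :
        Set (((b : Fin t) × Fin (s b)) → AddCircle (1:ℝ))) ↔
    ((∀ b : Fin t, ∀ h2 : (b : ℕ) + 2 ≤ t,
        s b = (v / w b.castSucc - v / w ⟨(b : ℕ) + 2, by omega⟩) * (k+1)) ∧
      s ⟨t-1, by omega⟩ = (v / w ⟨t-1, by omega⟩) * (k+1)) := by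
  set g : ((b : Fin t) × Fin (s b)) → AddCircle (1 : ℝ) :=
    fun x => ((1 / (w x.1.succ : ℝ) : ℝ) : AddCircle (1 : ℝ)) with hg
  obtain ⟨W, hW⟩ : ∃ W : ℕ → ℕ, ∀ i, W i = if h : i < t + 1 then w ⟨i, h⟩ else v * 2 ^ (i - t) :=
    ⟨_, fun _ => rfl⟩
  obtain ⟨S, hS⟩ : ∃ S : ℕ → ℕ, ∀ i, S i = if h : i < t then s ⟨i, h⟩ else 0 := ⟨_, fun _ => rfl⟩
  have hWw : ∀ i (h : i < t + 1), W i = w ⟨i, h⟩ := fun i h => by rw [hW, dif_pos h]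
  have hSs : ∀ i (h : i < t), S i = s ⟨i, h⟩ := fun i h => by rw [hS, dif_pos h]
  have hWt : W t = v := by rw [hWw t (by omega), ← hwlast]; rfl
  have hW0 : W 0 = 1 := (hWw 0 (by omega)).trans hw0
  have hWge : ∀ i, t ≤ i → W i = v * 2 ^ (i - t) := fun i hi => by
    rcases hi.eq_or_lt with rfl | h
    · simp [hWt]
    · rw [hW, dif_neg (by omega)]
  have hWsucc : ∀ i, t ≤ i → W (i + 1) = W i * 2 := fun i hi => by
    rw [hWge i hi, hWge (i + 1) (by omega), Nat.succ_sub hi, pow_succ, mul_assoc]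
  have hd : ∀ i, W i ∣ W (i + 1) := fun i => by
    rcases lt_or_ge i t with h | h
    · rw [hWw i (by omega), hWw (i + 1) (by omega)]
      exact hdvd ⟨i, h⟩
    · exact hWsucc i h ▸ dvd_mul_right _ _
  have hm : StrictMono W := strictMono_nat_of_lt_succ fun i => by
    rcases lt_or_ge i t with h | h
    · rw [hWw i (by omega), hWw (i + 1) (by omega)]
      exact hmono (Fin.mk_lt_mk.2 (Nat.lt_succ_self i))
    · have : 0 < W i := by rw [hWge i h]; positivity
      rw [hWsucc i h]
      omega
  have hwsucc : ∀ b : Fin t, w b.succ = W (b + 1) := fun b => (hWw _ (by omega)).symm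
  have hheight : ht ∘ (fun n : ℕ => n • g) = blockHeight W S t := by
    funext n
    unfold blockHeight
    simp only [Function.comp, ht, hg, Pi.smul_apply, fracR_nsmul_one_div]
    rw [Fintype.sum_sigma, Finset.sum_range]
    refine Finset.sum_congr rfl fun b _ => ?_
    dsimp only
    rw [Finset.sum_const, Finset.card_univ, Fintype.card_fin, nsmul_eq_mul, hSs b b.2, hwsucc]
  have hgv : v • g = 0 := by
    funext x
    have hdv : W (x.1 + 1) ∣ v := hWt ▸ dvd_of_le_of_dvd_succ hd x.1.2
    have hpos : (W (x.1 + 1) : ℝ) ≠ 0 := by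
      exact_mod_cast ((Nat.zero_le _).trans_lt (hm (Nat.lt_succ_self x.1))).ne'
    obtain ⟨c, hc⟩ := hdv
    rw [Pi.smul_apply, hg, ← AddCircle.coe_nsmul, Pi.zero_apply, AddCircle.coe_eq_zero_iff]
    refine ⟨c, ?_⟩
    rw [hwsucc, hc]
    simp only [zsmul_eq_mul, nsmul_eq_mul]
    push_cast
    field_simp
  have hinj : Set.InjOn (fun n : ℕ => n • g) (Set.Iio v) := by
    intro a ha b hb hab
    have hx := congrArg fracR (congrFun hab ⟨⟨t - 1, by omega⟩, ⟨0, hs _⟩⟩)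
    simp only [hg, Pi.smul_apply, fracR_nsmul_one_div, hwsucc, Nat.sub_add_cancel ht1, hWt,
      Nat.mod_eq_of_lt (Set.mem_Iio.1 ha), Nat.mod_eq_of_lt (Set.mem_Iio.1 hb)] at hx
    have hv0 : (v : ℝ) ≠ 0 := by positivity
    exact_mod_cast (div_left_inj' hv0).1 hx
  unfold HasDeltaPoly
  rw [← image_nsmul_Iio_eq_zmultiples (by omega) hgv, ← Set.bijOn_comp_iff hinj, hheight, ← hWt,
    bijOn_blockHeight_iff hm hd hW0 ht1 (fun i hi => by rw [hSs i hi]; exact hs _)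
      (Nat.succ_pos k)]
  refine and_congr ⟨fun h b hb => ?_, fun h i hi => ?_⟩ ?_
  · rw [← hSs b b.2, h b hb, hWw (b + 2) (by omega), hWw b (by omega)]
    rfl
  · rw [hSs i (by omega), h ⟨i, by omega⟩ hi, hWw (i + 2) (by omega), hWw i (by omega)]
    rfl
  · rw [hSs (t - 1) (by omega), hWw (t - 1) (by omega)]
end
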